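/- arXiv:1402.3251 — 3 statements merged into one kernel-verified Lean document; each statement's English description precedes it below -/
import Mathlib

section
/- Let G be a connected finite simple graph on n vertices and let 1 ≤ k ≤ n. Then the number of partitions of the vertex set of G into exactly k blocks, each of which induces a connected subgraph of G, is at least the binomial coefficient C(n−1, k−1). -/
open Finset
open scoped Classical

/-- The finset of all partitions of the vertex set of `G` (encoded as finsets of
pairwise disjoint nonempty blocks covering `V`) all of whose blocks induce connected
subgraphs of `G`. -/
noncomputable def connPartitions {V : Type*} [Fintype V] [DecidableEq V]
    (G : SimpleGraph V) : Finset (Finset (Finset V)) :=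
  Finset.univ.filter (fun P =>
    (∀ v : V, ∃! B, B ∈ P ∧ v ∈ B) ∧
    ∀ B ∈ P, B.Nonempty ∧ (SimpleGraph.induce (↑B : Set V) G).Connected)

/-!
Fix a spanning tree `T` of `G`. Deleting `k - 1` of its `n - 1` edges leaves a forest with exactly
`k` components, whose vertex sets are connected in `G`. The deleted edges can be recovered from
these vertex sets, as they are the edges of `T` whose endpoints lie in different blocks.
-/

open SimpleGraph

section Forest

variable {V : Type*} {G H T : SimpleGraph V}

theorem sum_card_connectedComponent_supp [Fintype V] (G : SimpleGraph V) :
    ∑ c : G.ConnectedComponent, Nat.card c.supp = Nat.card V := by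
  rw [← Nat.card_sigma]
  exact Nat.card_congr (Equiv.sigmaFiberEquiv G.connectedComponentMk)

theorem degree_toSimpleGraph [Fintype V] (c : G.ConnectedComponent) (v : c) :
    c.toSimpleGraph.degree v = G.degree v := by
  have hv : G.neighborSet v ⊆ c.supp := fun w hw => (c.mem_supp_congr_adj hw).1 v.2
  exact degree_induce_of_neighborSet_subset (v := v) hv

theorem sum_card_edgeSet_toSimpleGraph [Fintype V] (G : SimpleGraph V) :
    ∑ c : G.ConnectedComponent, Nat.card c.toSimpleGraph.edgeSet = Nat.card G.edgeSet := by
  simp only [Nat.card_eq_fintype_card, ← edgeFinset_card]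
  refine Nat.eq_of_mul_eq_mul_left two_pos ?_
  calc 2 * ∑ c : G.ConnectedComponent, #c.toSimpleGraph.edgeFinset
      = ∑ c : G.ConnectedComponent, ∑ v : c, c.toSimpleGraph.degree v := by
        rw [mul_sum]
        exact sum_congr rfl fun c _ => c.toSimpleGraph.sum_degrees_eq_twice_card_edges.symm
    _ = ∑ c : G.ConnectedComponent, ∑ v : c, G.degree v := by
        simp only [degree_toSimpleGraph]
    _ = ∑ v, G.degree v := by
        rw [← Fintype.sum_fiberwise G.connectedComponentMk]
        exact sum_congr rfl fun c _ => Fintype.sum_equiv (Equiv.refl c) _ _ fun _ => rfl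
    _ = 2 * #G.edgeFinset := G.sum_degrees_eq_twice_card_edges

theorem card_edgeSet_add_card_connectedComponent_of_isAcyclic [Finite V] (hG : G.IsAcyclic) :
    Nat.card G.edgeSet + Nat.card G.ConnectedComponent = Nat.card V := by
  have := Fintype.ofFinite V
  have card_tree (c : G.ConnectedComponent) :
      Nat.card c.toSimpleGraph.edgeSet + 1 = Nat.card c.supp :=
    (isTree_iff_connected_and_card.1 (hG.isTree_connectedComponent c)).2
  calc Nat.card G.edgeSet + Nat.card G.ConnectedComponent
      = ∑ c : G.ConnectedComponent, (Nat.card c.toSimpleGraph.edgeSet + 1) := by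
        rw [sum_add_distrib, sum_card_edgeSet_toSimpleGraph, sum_const, card_univ, smul_eq_mul,
          mul_one, Nat.card_eq_fintype_card (α := G.ConnectedComponent)]
    _ = ∑ c : G.ConnectedComponent, Nat.card c.supp := sum_congr rfl fun c _ => card_tree c
    _ = Nat.card V := sum_card_connectedComponent_supp G

theorem card_connectedComponent_deleteEdges_of_isAcyclic [Finite V] (hG : G.IsAcyclic)
    {S : Set (Sym2 V)} (hS : S ⊆ G.edgeSet) :
    Nat.card (G.deleteEdges S).ConnectedComponent = Nat.card G.ConnectedComponent + S.ncard := by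
  have hdel := card_edgeSet_add_card_connectedComponent_of_isAcyclic (hG.anti (G.deleteEdges_le S))
  have hfull := card_edgeSet_add_card_connectedComponent_of_isAcyclic hG
  have hedges := Set.ncard_sdiff_add_ncard_of_subset hS
  rw [edgeSet_deleteEdges] at hdel
  simp only [Nat.card_coe_set_eq] at hdel hfull
  omega

theorem card_connectedComponent_deleteEdges_of_isTree [Finite V] (hT : T.IsTree)
    {S : Set (Sym2 V)} (hS : S ⊆ T.edgeSet) :
    Nat.card (T.deleteEdges S).ConnectedComponent = S.ncard + 1 := by
  have := hT.connected.nonempty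
  have := hT.connected.preconnected.subsingleton_connectedComponent
  rw [card_connectedComponent_deleteEdges_of_isAcyclic hT.isAcyclic hS, Nat.card_of_subsingleton
    (T.connectedComponentMk (Classical.arbitrary V)), add_comm]

theorem adj_iff_adj_and_reachable_of_isAcyclic (hT : T.IsAcyclic) (hHT : H ≤ T) {u v : V} :
    H.Adj u v ↔ T.Adj u v ∧ H.Reachable u v := by
  refine ⟨fun h => ⟨hHT h, h.reachable⟩, fun ⟨hadj, hreach⟩ => ?_⟩
  by_contra hnot
  have hbridge : ¬ (T.deleteEdges {s(u, v)}).Reachable u v :=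
    isAcyclic_iff_forall_adj_isBridge.1 hT hadj
  have hle : H ≤ T.deleteEdges {s(u, v)} :=
    le_sdiff.2 ⟨hHT, (disjoint_fromEdgeSet _ _).2 (Set.disjoint_singleton_right.2 hnot)⟩
  exact hbridge (hreach.mono hle)

theorem injOn_deleteEdges (G : SimpleGraph V) : Set.InjOn G.deleteEdges (𝒫 G.edgeSet) := by
  intro S hS S' hS' h
  calc S = G.edgeSet \ (G.deleteEdges S).edgeSet := by
        rw [edgeSet_deleteEdges, Set.sdiff_sdiff_cancel_left hS]
    _ = G.edgeSet \ (G.deleteEdges S').edgeSet := by rw [h]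
    _ = S' := by rw [edgeSet_deleteEdges, Set.sdiff_sdiff_cancel_left hS']

end Forest

section ComponentBlocks

variable {V : Type*} [Fintype V] {G H T : SimpleGraph V}

/-- The partition of the vertex set of `H` into the vertex sets of its connected components, encoded
as a finset of finsets to match `connPartitions`. -/
noncomputable def componentBlocks (H : SimpleGraph V) : Finset (Finset V) :=
  univ.image fun c : H.ConnectedComponent => c.supp.toFinset

theorem mem_componentBlocks {B : Finset V} :
    B ∈ componentBlocks H ↔ ∃ c : H.ConnectedComponent, c.supp = B := by
  simp only [componentBlocks, mem_image, mem_univ, true_and, ← coe_inj, Set.coe_toFinset]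

theorem card_componentBlocks (H : SimpleGraph V) :
    #(componentBlocks H) = Nat.card H.ConnectedComponent := by
  have hinj : Function.Injective fun c : H.ConnectedComponent => c.supp.toFinset :=
    fun _ _ h => ConnectedComponent.supp_injective (Set.toFinset_inj.1 h)
  rw [componentBlocks, card_image_of_injective _ hinj, card_univ, Nat.card_eq_fintype_card]

theorem reachable_iff_exists_mem_componentBlocks {u v : V} :
    H.Reachable u v ↔ ∃ B ∈ componentBlocks H, u ∈ B ∧ v ∈ B := by
  constructor
  · intro h
    refine ⟨(H.connectedComponentMk v).supp.toFinset, ?_, ?_, ?_⟩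
    · exact mem_componentBlocks.2 ⟨_, (Set.coe_toFinset _).symm⟩
    · exact Set.mem_toFinset.2 (ConnectedComponent.sound h)
    · exact Set.mem_toFinset.2 ConnectedComponent.connectedComponentMk_mem
  · rintro ⟨B, hB, hu, hv⟩
    obtain ⟨c, hc⟩ := mem_componentBlocks.1 hB
    exact c.reachable_of_mem_supp (hc ▸ hu) (hc ▸ hv)

theorem componentBlocks_mem_connPartitions [DecidableEq V] (hHG : H ≤ G) :
    componentBlocks H ∈ connPartitions G := by
  refine mem_filter.2 ⟨mem_univ _, fun v => ?_, fun B hB => ?_⟩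
  · obtain ⟨B, hB, hvB, -⟩ := reachable_iff_exists_mem_componentBlocks.1
      (Reachable.refl (G := H) v)
    refine ⟨B, ⟨hB, hvB⟩, fun C ⟨hC, hvC⟩ => ?_⟩
    obtain ⟨b, hb⟩ := mem_componentBlocks.1 hB
    obtain ⟨c, hc⟩ := mem_componentBlocks.1 hC
    have hcb : c = b := ConnectedComponent.eq_of_common_vertex (v := v) (hc ▸ hvC) (hb ▸ hvB)
    rw [← coe_inj, ← hb, ← hc, hcb]
  · obtain ⟨c, hc⟩ := mem_componentBlocks.1 hB
    rw [← coe_nonempty, ← hc]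
    exact ⟨c.nonempty_supp, c.connected_toSimpleGraph.mono (comap_monotone _ hHG)⟩

theorem injOn_componentBlocks_of_isAcyclic (hT : T.IsAcyclic) :
    Set.InjOn componentBlocks (Set.Iic T) := by
  intro H hH K hK h
  ext u v
  rw [adj_iff_adj_and_reachable_of_isAcyclic hT hH, adj_iff_adj_and_reachable_of_isAcyclic hT hK,
    reachable_iff_exists_mem_componentBlocks, reachable_iff_exists_mem_componentBlocks, h]

end ComponentBlocks

/-- For a connected graph `G` on `n` vertices and `1 ≤ k ≤ n`, the number of
partitions of the vertex set into exactly `k` connected blocks is at least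
`C(n-1, k-1)`. -/
theorem card_connPartitions_ge {V : Type*} [Fintype V] [DecidableEq V]
    (G : SimpleGraph V) (hG : G.Connected) (k : ℕ)
    (hk1 : 1 ≤ k) (hk2 : k ≤ Fintype.card V) :
    ((connPartitions G).filter (fun P => P.card = k)).card ≥
      (Fintype.card V - 1).choose (k - 1) := by
  obtain ⟨T, hTG, hT⟩ := hG.exists_isTree_le
  have hedges : #T.edgeFinset = Fintype.card V - 1 := Nat.eq_sub_of_add_eq hT.card_edgeFinset
  rw [ge_iff_le, ← hedges, ← card_powersetCard]
  have hsub {S : Finset (Sym2 V)} (hS : S ∈ powersetCard (k - 1) T.edgeFinset) :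
      (S : Set (Sym2 V)) ⊆ T.edgeSet := by
    simpa only [← coe_subset, coe_edgeFinset] using (mem_powersetCard.1 hS).1
  refine card_le_card_of_injOn (fun S => componentBlocks (T.deleteEdges (S : Set (Sym2 V)))) ?_ ?_
  · intro S hS
    refine mem_filter.2 ⟨componentBlocks_mem_connPartitions ((T.deleteEdges_le _).trans hTG), ?_⟩
    rw [card_componentBlocks, card_connectedComponent_deleteEdges_of_isTree hT (hsub hS),
      Set.ncard_coe_finset, (mem_powersetCard.1 hS).2, Nat.sub_add_cancel hk1]
  · intro S hS S' hS' h
    exact coe_injective <| injOn_deleteEdges T (hsub hS) (hsub hS') <|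
      injOn_componentBlocks_of_isAcyclic hT.isAcyclic (T.deleteEdges_le _) (T.deleteEdges_le _) h
end

section
/- Let G be a connected finite simple 3-regular graph on n vertices (so that its edge set has cardinality 3n/2), and let β ≥ (ln 2)/2. Then Z_G(β) ≥ 2·(2·sinh β)^{3n/2} − 2·e^{−(3/2)βn}·(e^{2β} − 1)^{n−1} + 2·e^{−(3/2)βn}·(e^{2β} + 1)^{n−1}. -/
open Finset

/-- The spin value associated to a Boolean: `true ↦ +1`, `false ↦ -1`. -/
noncomputable def spin (b : Bool) : ℝ := if b then 1 else -1

/-- The Ising interaction energy `Σ_{{i,j} ∈ E} σ(i)σ(j)` of a spin configuration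
`σ : V → {±1}` (encoded via `Bool`) on a finite simple graph `G`. -/
noncomputable def isingEnergy {V : Type*} [Fintype V] [DecidableEq V]
    (G : SimpleGraph V) [DecidableRel G.Adj] (σ : V → Bool) : ℝ :=
  ∑ e ∈ G.edgeFinset,
    Sym2.lift ⟨fun i j => spin (σ i) * spin (σ j), fun i j => by ring⟩ e

/-- The Ising partition function `Z_G(β) = Σ_σ exp(β Σ_{{i,j} ∈ E} σ(i)σ(j))`. -/
noncomputable def isingZ {V : Type*} [Fintype V] [DecidableEq V]
    (G : SimpleGraph V) [DecidableRel G.Adj] (β : ℝ) : ℝ :=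
  ∑ σ : V → Bool, Real.exp (β * isingEnergy G σ)

/-! Expanding `exp (β σᵢ σⱼ) = exp (-β) (1 + w 𝟙[σᵢ = σⱼ])`, with `w = exp (2β) - 1`, over all edges
and summing over `σ` gives the Fortuin–Kasteleyn formula
`Z = exp (-β |E|) ∑_{A ⊆ E} w ^ |A| * 2 ^ c(A)`, where `c(A)` counts the components of `(V, A)`. All
terms are nonnegative when `β ≥ 0`. Fix a spanning tree `T` and keep only `A = E` and `A ⊊ T`. Since
`c(A) ≥ n - |A|`, the terms `A ⊆ T` sum to at least `2 (w + 2) ^ (n - 1)` by the binomial theorem;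
removing `A = T`, which might be `E`, costs `2 w ^ (n - 1)`. -/

section Components

variable {V : Type*} (G : SimpleGraph V)

theorem card_vert_le_card_edgeSet_add_card_connectedComponent [Finite V] :
    Nat.card V ≤ Nat.card G.edgeSet + Nat.card G.ConnectedComponent := by
  have := Fintype.ofFinite G.ConnectedComponent
  let edgeOf : (Σ C : G.ConnectedComponent, C.toSimpleGraph.edgeSet) → G.edgeSet :=
    fun x => x.1.toSimpleGraph_hom.mapEdgeSet x.2
  have edgeOf_injective : Function.Injective edgeOf := by
    rintro ⟨C, e⟩ ⟨D, f⟩ h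
    obtain rfl : C = D := by
      obtain ⟨u, hu⟩ : ∃ u, u ∈ e.1 := ⟨_, Sym2.out_fst_mem e.1⟩
      have hu' : u.1 ∈ (edgeOf ⟨D, f⟩).1 := h ▸ Sym2.mem_map.2 ⟨u, hu, rfl⟩
      obtain ⟨v, -, hvu⟩ := Sym2.mem_map.1 hu'
      exact SimpleGraph.ConnectedComponent.eq_of_common_vertex u.2 (hvu ▸ v.2)
    have hef : e = f :=
      SimpleGraph.Hom.mapEdgeSet.injective C.toSimpleGraph_hom Subtype.val_injective h
    rw [hef]
  calc
    Nat.card V = ∑ C : G.ConnectedComponent, Nat.card C := by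
      rw [← Nat.card_sigma]
      exact Nat.card_congr (Equiv.sigmaFiberEquiv G.connectedComponentMk).symm
    _ ≤ ∑ C : G.ConnectedComponent, (Nat.card C.toSimpleGraph.edgeSet + 1) :=
      sum_le_sum fun C _ => C.connected_toSimpleGraph.card_vert_le_card_edgeSet_add_one
    _ = Nat.card (Σ C : G.ConnectedComponent, C.toSimpleGraph.edgeSet)
        + Nat.card G.ConnectedComponent := by
      rw [sum_add_distrib, Nat.card_sigma, Nat.card_eq_fintype_card, Fintype.card_eq_sum_ones]
    _ ≤ Nat.card G.edgeSet + Nat.card G.ConnectedComponent := by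
      gcongr
      exact Nat.card_le_card_of_injective edgeOf edgeOf_injective

theorem range_comp_connectedComponentMk {α : Type*} :
    Set.range (fun f : G.ConnectedComponent → α => f ∘ G.connectedComponentMk)
      = {σ | ∀ u v, G.Adj u v → σ u = σ v} := by
  ext σ
  constructor
  · rintro ⟨f, rfl⟩ u v huv
    exact congrArg f (SimpleGraph.ConnectedComponent.sound huv.reachable)
  · intro hσ
    have eq_of_walk {u v : V} (p : G.Walk u v) : σ u = σ v := by
      induction p with
      | nil => rfl
      | cons huv _ ih => exact (hσ _ _ huv).trans ih
    exact ⟨SimpleGraph.ConnectedComponent.lift σ fun _ _ p _ => eq_of_walk p, rfl⟩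

end Components

section RandomCluster

variable {V : Type*}

/-- The number of open clusters of the bond configuration `A`: the connected components, isolated
vertices included, of the spanning subgraph with edge set `A`. -/
noncomputable def clusterCount (A : Finset (Sym2 V)) : ℕ :=
  Nat.card (SimpleGraph.fromEdgeSet (A : Set (Sym2 V))).ConnectedComponent

/-- The (unnormalised) random-cluster partition function of Fortuin and Kasteleyn, with edge weight
`w` and cluster weight `q`. In terms of an edge probability `p`, `w = p / (1 - p)`. -/
noncomputable def randomClusterZ {R : Type*} [CommSemiring R] (G : SimpleGraph V)
    [Fintype G.edgeSet] (w q : R) : R :=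
  ∑ A ∈ G.edgeFinset.powerset, w ^ #A * q ^ clusterCount A

theorem card_le_card_add_clusterCount [Fintype V] (A : Finset (Sym2 V)) :
    Fintype.card V ≤ #A + clusterCount A := by
  have hA : Nat.card (SimpleGraph.fromEdgeSet (A : Set (Sym2 V))).edgeSet ≤ #A := by
    rw [SimpleGraph.edgeSet_fromEdgeSet, ← Set.ncard_coe_finset A]
    exact Set.ncard_le_ncard Set.sdiff_subset A.finite_toSet
  calc
    Fintype.card V = Nat.card V := Nat.card_eq_fintype_card.symm
    _ ≤ _ := card_vert_le_card_edgeSet_add_card_connectedComponent _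
    _ ≤ #A + clusterCount A := Nat.add_le_add_right hA _

theorem clusterCount_edgeFinset {G : SimpleGraph V} [Fintype G.edgeSet] (hG : G.Connected) :
    clusterCount G.edgeFinset = 1 := by
  have := hG.nonempty
  have := hG.preconnected.subsingleton_connectedComponent
  rw [clusterCount, SimpleGraph.coe_edgeFinset, SimpleGraph.fromEdgeSet_edgeSet, Nat.card_unique]

theorem card_filter_forall_isDiag_map {α : Type*} [Fintype V] [DecidableEq V] [Fintype α]
    [DecidableEq α] (A : Finset (Sym2 V)) :
    #{σ : V → α | ∀ e ∈ A, (e.map σ).IsDiag} = Fintype.card α ^ clusterCount A := by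
  let H := SimpleGraph.fromEdgeSet (A : Set (Sym2 V))
  have isDiag_iff_adj (σ : V → α) :
      (∀ e ∈ A, (e.map σ).IsDiag) ↔ ∀ u v, H.Adj u v → σ u = σ v := by
    simp only [Sym2.forall, Sym2.map_mk, Sym2.mk_isDiag_iff, H, SimpleGraph.fromEdgeSet_adj,
      mem_coe]
    exact forall₂_congr fun u v => by grind
  have injective_comp_mk :
      Function.Injective fun f : H.ConnectedComponent → α => f ∘ H.connectedComponentMk :=
    Function.Surjective.injective_comp_right Quot.mk_surjective
  calc
    #{σ : V → α | ∀ e ∈ A, (e.map σ).IsDiag}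
        = Nat.card {σ : V → α | ∀ u v, H.Adj u v → σ u = σ v} := by
      simp_rw [isDiag_iff_adj]
      rw [← Set.ncard_coe_finset, coe_filter_univ, Nat.card_coe_set_eq]
    _ = Nat.card (H.ConnectedComponent → α) := by
      rw [← range_comp_connectedComponentMk, Nat.card_range_of_injective injective_comp_mk]
    _ = Fintype.card α ^ clusterCount A := by
      rw [Nat.card_fun, Nat.card_eq_fintype_card, clusterCount]

/-- The Fortuin–Kasteleyn representation of the Potts model with spins in `α`: `(e.map σ).IsDiag`
says that `σ` agrees at the two ends of `e`. -/
theorem sum_prod_one_add_ite_eq_randomClusterZ {α R : Type*} [Fintype V] [DecidableEq V] [Fintype α]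
    [DecidableEq α] [CommSemiring R] (G : SimpleGraph V) [Fintype G.edgeSet] (w : R) :
    ∑ σ : V → α, ∏ e ∈ G.edgeFinset, (1 + if (e.map σ).IsDiag then w else 0)
      = randomClusterZ G w (Fintype.card α : R) := by
  simp_rw [prod_one_add, prod_ite_zero, prod_const]
  rw [sum_comm]
  refine sum_congr rfl fun A _ => ?_
  rw [← sum_filter, sum_const, card_filter_forall_isDiag_map, nsmul_eq_mul, mul_comm, Nat.cast_pow]

variable {R : Type*} [CommRing R] [LinearOrder R] [IsStrictOrderedRing R] {w q : R}

theorem mul_add_pow_card_le_sum_powerset [Fintype V] {T : Finset (Sym2 V)}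
    (hT : #T + 1 = Fintype.card V) (hw : 0 ≤ w) (hq : 1 ≤ q) :
    q * (w + q) ^ #T ≤ ∑ A ∈ T.powerset, w ^ #A * q ^ clusterCount A := by
  rw [← sum_pow_mul_eq_add_pow, mul_sum]
  refine sum_le_sum fun A hA => ?_
  have hAT : #A ≤ #T := card_le_card (mem_powerset.1 hA)
  have hc := card_le_card_add_clusterCount A
  calc
    q * (w ^ #A * q ^ (#T - #A)) = w ^ #A * q ^ (#T - #A + 1) := by ring
    _ ≤ w ^ #A * q ^ clusterCount A := by
      gcongr ?_ * ?_
      exact pow_le_pow_right₀ hq (by omega)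

theorem randomClusterZ_lower_bound [Fintype V] {G : SimpleGraph V} [Fintype G.edgeSet]
    (hG : G.Connected) (hw : 0 ≤ w) (hq : 1 ≤ q) :
    q * w ^ #G.edgeFinset - q * w ^ (Fintype.card V - 1)
        + q * (w + q) ^ (Fintype.card V - 1) ≤ randomClusterZ G w q := by
  classical
  obtain ⟨T, hTG, hT⟩ := hG.exists_isTree_le
  have hTcard : #T.edgeFinset + 1 = Fintype.card V := hT.card_edgeFinset
  have hTE : T.edgeFinset ⊆ G.edgeFinset := SimpleGraph.edgeFinset_mono hTG
  have hE : G.edgeFinset ∉ T.edgeFinset.ssubsets := fun h => (mem_ssubsets.1 h).not_subset hTE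
  have hkept : insert G.edgeFinset T.edgeFinset.ssubsets ⊆ G.edgeFinset.powerset :=
    insert_subset (mem_powerset_self _) fun A hA =>
      mem_powerset.2 ((mem_ssubsets.1 hA).subset.trans hTE)
  rw [← hTcard, Nat.add_sub_cancel]
  calc
    q * w ^ #G.edgeFinset - q * w ^ #T.edgeFinset + q * (w + q) ^ #T.edgeFinset
        ≤ q * w ^ #G.edgeFinset - q * w ^ #T.edgeFinset
          + ∑ A ∈ T.edgeFinset.powerset, w ^ #A * q ^ clusterCount A := by
      gcongr
      exact mul_add_pow_card_le_sum_powerset hTcard hw hq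
    _ = ∑ A ∈ insert G.edgeFinset T.edgeFinset.ssubsets, w ^ #A * q ^ clusterCount A := by
      rw [sum_insert hE, ssubsets, sum_erase_eq_sub (mem_powerset_self _),
        clusterCount_edgeFinset hG, clusterCount_edgeFinset hT.connected]
      ring
    _ ≤ randomClusterZ G w q :=
      sum_le_sum_of_subset_of_nonneg hkept fun A _ _ => by positivity

end RandomCluster

theorem two_mul_card_edgeFinset_of_isRegularOfDegree {V : Type*} [Fintype V] {G : SimpleGraph V}
    [DecidableRel G.Adj] {d : ℕ} (hG : G.IsRegularOfDegree d) :
    2 * #G.edgeFinset = d * Fintype.card V := by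
  rw [← G.sum_degrees_eq_twice_card_edges, sum_congr rfl fun v _ => hG v, sum_const, card_univ,
    smul_eq_mul, mul_comm]

section Ising

theorem exp_mul_spin_mul_spin {V : Type*} (β : ℝ) (σ : V → Bool) (e : Sym2 V) :
    Real.exp (β * Sym2.lift ⟨fun i j => spin (σ i) * spin (σ j), fun i j => by ring⟩ e)
      = Real.exp (-β) * (1 + if (e.map σ).IsDiag then Real.exp (2 * β) - 1 else 0) := by
  have hexp : Real.exp (-β) * Real.exp (2 * β) = Real.exp β := by
    rw [← Real.exp_add]
    ring_nf
  induction e with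
  | _ i j => cases hi : σ i <;> cases hj : σ j <;> simp [spin, hi, hj, hexp]

variable {V : Type*} [Fintype V] [DecidableEq V] (G : SimpleGraph V) [DecidableRel G.Adj]

theorem isingZ_eq_randomClusterZ (β : ℝ) :
    isingZ G β = Real.exp (-β) ^ #G.edgeFinset * randomClusterZ G (Real.exp (2 * β) - 1) 2 := by
  have hedges (σ : V → Bool) : Real.exp (β * isingEnergy G σ) =
      Real.exp (-β) ^ #G.edgeFinset *
        ∏ e ∈ G.edgeFinset, (1 + if (e.map σ).IsDiag then Real.exp (2 * β) - 1 else 0) := by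
    simp_rw [isingEnergy, mul_sum, Real.exp_sum, exp_mul_spin_mul_spin, prod_mul_distrib,
      prod_const]
  simp_rw [isingZ, hedges, ← mul_sum]
  rw [sum_prod_one_add_ite_eq_randomClusterZ, Fintype.card_bool, Nat.cast_ofNat]

theorem isingZ_cubic_lower_bound_general (hG : G.Connected) {β : ℝ} (hβ : 0 ≤ β) :
    isingZ G β ≥
      2 * (2 * Real.sinh β) ^ #G.edgeFinset
        - 2 * Real.exp (-β * #G.edgeFinset) * (Real.exp (2 * β) - 1) ^ (Fintype.card V - 1)
        + 2 * Real.exp (-β * #G.edgeFinset) * (Real.exp (2 * β) + 1) ^ (Fintype.card V - 1) := by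
  have hw : 0 ≤ Real.exp (2 * β) - 1 := sub_nonneg.2 (Real.one_le_exp (by positivity))
  have hsinh : 2 * Real.sinh β = Real.exp (-β) * (Real.exp (2 * β) - 1) := by
    rw [Real.sinh_eq, mul_sub, ← Real.exp_add]
    ring_nf
  have hexp : Real.exp (-β * #G.edgeFinset) = Real.exp (-β) ^ #G.edgeFinset := by
    rw [mul_comm, Real.exp_nat_mul]
  have hbound := mul_le_mul_of_nonneg_left (randomClusterZ_lower_bound hG hw one_le_two)
    (pow_nonneg (Real.exp_nonneg (-β)) #G.edgeFinset)
  rw [← isingZ_eq_randomClusterZ] at hbound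
  rw [hsinh, hexp, mul_pow, ge_iff_le]
  linear_combination hbound

end Ising

/-- For a connected 3-regular graph on `n` vertices (so `|E| = 3n/2`) and
`β ≥ (ln 2)/2`:
`Z_G(β) ≥ 2 (2 sinh β)^{3n/2} - 2 e^{-(3/2)βn} (e^{2β} - 1)^{n-1}
          + 2 e^{-(3/2)βn} (e^{2β} + 1)^{n-1}`. -/
theorem isingZ_cubic_lower_bound {V : Type*} [Fintype V] [DecidableEq V]
    (G : SimpleGraph V) [DecidableRel G.Adj] (hG : G.Connected)
    (hreg : ∀ v : V, G.degree v = 3) (β : ℝ) (hβ : Real.log 2 / 2 ≤ β) :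
    isingZ G β ≥
      2 * (2 * Real.sinh β) ^ ((3 * (Fintype.card V : ℝ)) / 2)
        - 2 * Real.exp (-(3 / 2) * β * Fintype.card V)
            * (Real.exp (2 * β) - 1) ^ (Fintype.card V - 1)
        + 2 * Real.exp (-(3 / 2) * β * Fintype.card V)
            * (Real.exp (2 * β) + 1) ^ (Fintype.card V - 1) := by
  have hβ0 : 0 ≤ β := (div_nonneg (Real.log_nonneg one_le_two) zero_le_two).trans hβ
  have hcard : 2 * (#G.edgeFinset : ℝ) = 3 * Fintype.card V :=
    mod_cast two_mul_card_edgeFinset_of_isRegularOfDegree hreg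
  have hE : 3 * (Fintype.card V : ℝ) / 2 = #G.edgeFinset := by rw [← hcard]; ring
  have hexponent : -(3 / 2) * β * Fintype.card V = -β * #G.edgeFinset := by rw [← hE]; ring
  rw [hexponent, hE, Real.rpow_natCast]
  exact isingZ_cubic_lower_bound_general G hG hβ0
end

section
/- For every real μ > ln 2, the limit lim_{N→∞} (1/N)·ln Z_N(μ) exists and equals ln Λ(μ), where Λ(μ) = ((1 − √(1 − 4e^{−2μ})) / (2e^{−μ}))². -/
/-!
For `μ > ln 2` the partition function has the closed form `Z_N = Λ ^ N / (1 - Λ ^ N)`, which gives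
the limit at once. By the negative binomial series, row `n` of the transfer matrix consists of the
nonconstant Taylor coefficients of `φ ^ n`, where `φ y = g / (1 - g y)` and `g = e^{-μ}`. The
matrix thus represents composition with `φ` on power series modulo constants, and its `N`-th power,
whose trace is `Z_N`, represents composition with the iterate `ψ = φ^[N]`. By Cauchy's formula that
trace is `(2πi)⁻¹ ∮ (z - ψ z)⁻¹ dz - 1`, an integral over the unit circle. As `ψ` is a Möbius map
with a single fixed point in the unit disc, of multiplier `Λ ^ N`, the residue theorem evaluates the
trace to `(1 - Λ ^ N)⁻¹ - 1`.
-/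

open scoped ENNReal

/-- The transfer-matrix weight `u(n, n') = C(n + n' - 1, n - 1) e^{-μ(n + n')}` of pure
causal dynamical triangulations, as an extended nonnegative real. -/
noncomputable def cdtWeight (μ : ℝ) (n n' : ℕ+) : ℝ≥0∞ :=
  ENNReal.ofReal
    ((((n : ℕ) + (n' : ℕ) - 1).choose ((n : ℕ) - 1) : ℝ) *
      Real.exp (-μ * ((n : ℕ) + (n' : ℕ))))

/-- The pure CDT transfer-matrix partition function
`Z_N(μ) = Σ_{(n_1, …, n_N) ∈ (ℕ≥1)^N} Π_i C(n_i + n_{i+1} - 1, n_i - 1) e^{-μ(n_i + n_{i+1})}`,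
with cyclic indices (the successor of `i` taken via the cyclic rotation `finRotate`), as a sum in the extended nonnegative reals. -/
noncomputable def cdtZ (N : ℕ) (μ : ℝ) : ℝ≥0∞ :=
  ∑' f : Fin N → ℕ+, ∏ i : Fin N, cdtWeight μ (f i) (f (finRotate N i))

/-- `Λ(μ) = ((1 - √(1 - 4 e^{-2μ})) / (2 e^{-μ}))²`. -/
noncomputable def cdtLambda (μ : ℝ) : ℝ :=
  ((1 - Real.sqrt (1 - 4 * Real.exp (-2 * μ))) / (2 * Real.exp (-μ))) ^ 2

section PathSum

variable {α : Type*} (w : α → α → ℝ≥0∞)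

/-- The `k`-th power of a nonnegative kernel `w`, regarded as an infinite matrix indexed by `α`;
it sums the weights of all `k`-step paths between two points. -/
noncomputable def kernelPow [DecidableEq α] : ℕ → α → α → ℝ≥0∞
  | 0, a, b => if a = b then 1 else 0
  | k + 1, a, b => ∑' c, w a c * kernelPow k c b

variable [DecidableEq α]

-- The weight `G` of the endpoints is what makes the induction go through: splitting off the first
-- step of a path absorbs its weight into `G`.
lemma tsum_path_weight_mul_eq_tsum_kernelPow (k : ℕ) (G : α → α → ℝ≥0∞) :
    ∑' f : Fin (k + 1) → α,
        (∏ i : Fin k, w (f i.castSucc) (f i.succ)) * G (f 0) (f (Fin.last k)) =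
      ∑' a, ∑' b, kernelPow w k a b * G a b := by
  induction k generalizing G with
  | zero =>
    rw [← (Equiv.funUnique (Fin 1) α).symm.tsum_eq]
    refine tsum_congr fun a => ?_
    rw [tsum_eq_single a fun b hb => by simp [kernelPow, hb.symm]]
    simp [kernelPow]
  | succ k ih =>
    rw [← (Fin.consEquiv fun _ : Fin (k + 2) => α).tsum_eq, ENNReal.tsum_prod']
    refine tsum_congr fun a => ?_
    have split_first_step (f : Fin (k + 1) → α) :
        (∏ i : Fin (k + 1), w (Fin.cons (α := fun _ => α) a f i.castSucc) (f i)) *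
            G a (f (Fin.last k)) =
          (∏ i : Fin k, w (f i.castSucc) (f i.succ)) * (w a (f 0) * G a (f (Fin.last k))) := by
      rw [Fin.prod_univ_succ]
      simp only [Fin.castSucc_zero, Fin.cons_zero, Fin.cons_succ, ← Fin.succ_castSucc]
      ring
    simp only [Fin.consEquiv_apply, Fin.cons_zero, ← Fin.succ_last, Fin.cons_succ,
      split_first_step]
    rw [ih fun c b => w a c * G a b, ENNReal.tsum_comm]
    refine tsum_congr fun b => ?_
    simp only [kernelPow, ← ENNReal.tsum_mul_right]
    exact tsum_congr fun c => by ring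

lemma tsum_closed_path_weight_eq_trace_kernelPow {N : ℕ} (hN : N ≠ 0) :
    ∑' f : Fin N → α, ∏ i : Fin N, w (f i) (f (finRotate N i)) =
      ∑' a, kernelPow w N a a := by
  obtain ⟨k, rfl⟩ := Nat.exists_eq_succ_of_ne_zero hN
  calc ∑' f : Fin (k + 1) → α, ∏ i : Fin (k + 1), w (f i) (f (finRotate (k + 1) i))
      = ∑' f : Fin (k + 1) → α,
          (∏ i : Fin k, w (f i.castSucc) (f i.succ)) * w (f (Fin.last k)) (f 0) := by
        simp only [Fin.prod_univ_castSucc, finRotate_apply,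
          Fin.coeSucc_eq_succ, Fin.last_add_one]
    _ = ∑' a, ∑' b, kernelPow w k a b * w b a :=
        tsum_path_weight_mul_eq_tsum_kernelPow w k fun a b => w b a
    _ = ∑' a, kernelPow w (k + 1) a a := by
        rw [ENNReal.tsum_comm]
        simp only [kernelPow, mul_comm]

end PathSum

section CircleIntegral

open Metric Real
open Complex (I)

lemma hasSum_circleIntegral_of_norm_le {ι E : Type*} [Countable ι] [NormedAddCommGroup E]
    [NormedSpace ℂ E] {c : ℂ} {R : ℝ} (hR : 0 ≤ R) {f : ι → ℂ → E} {F : ℂ → E} {u : ι → ℝ}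
    (hf : ∀ i, ContinuousOn (f i) (sphere c R)) (hu : Summable u)
    (hfu : ∀ i, ∀ z ∈ sphere c R, ‖f i z‖ ≤ u i)
    (hF : ∀ z ∈ sphere c R, HasSum (fun i => f i z) (F z)) :
    HasSum (fun i => ∮ z in C(c, R), f i z) (∮ z in C(c, R), F z) := by
  have on_circle (θ : ℝ) : circleMap c R θ ∈ sphere c R := circleMap_mem_sphere c hR θ
  refine intervalIntegral.hasSum_integral_of_dominated_convergence (fun i _ => R * u i)
    (fun i => ((hf i).circleIntegrable hR).out.aestronglyMeasurable_restrict_uIoc)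
    (fun i => .of_forall fun θ _ => ?_)
    (.of_forall fun _ _ => hu.mul_left R) intervalIntegrable_const
    (.of_forall fun θ _ => (hF _ (on_circle θ)).const_smul _)
  rw [norm_smul, deriv_circleMap, norm_mul, norm_circleMap_zero, abs_of_nonneg hR, Complex.norm_I,
    mul_one]
  exact mul_le_mul_of_nonneg_left (hfu i _ (on_circle θ)) hR

lemma circleIntegral_pow_mul_inv_pow_succ (m n : ℕ) {R : ℝ} (hR : 0 < R) :
    ∮ z in C(0, R), z ^ m * (z ^ (n + 1))⁻¹ = if n = m then 2 * π * I else 0 := by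
  have eq_zpow : ∮ z in C(0, R), z ^ m * (z ^ (n + 1))⁻¹ =
      ∮ z in C(0, R), (z - 0) ^ ((m : ℤ) - n - 1) := by
    refine circleIntegral.integral_congr hR.le fun z hz => ?_
    have hz0 : z ≠ 0 := ne_of_mem_sphere hz hR.ne'
    simp only [sub_zero, ← zpow_natCast, ← zpow_neg, ← zpow_add₀ hz0]
    congr 1
    push_cast
    ring
  rw [eq_zpow]
  split_ifs with h
  · simp only [h, sub_self, zero_sub, zpow_neg_one,
      circleIntegral.integral_sub_center_inv (0 : ℂ) hR.ne']
  · exact circleIntegral.integral_sub_zpow_of_ne (by omega) 0 0 R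

lemma hasSum_coeff_diag {ι : Type*} [Countable ι] {e : ι → ℕ} (he : e.Injective) {c : ι → ι → ℂ}
    {R : ℝ} (hR : 0 < R) {F : ℂ → ℂ}
    (hc : Summable fun p : ι × ι => ‖c p.1 p.2‖ * (R ^ e p.2 * (R ^ (e p.1 + 1))⁻¹))
    (hF : ∀ z ∈ sphere (0 : ℂ) R,
      HasSum (fun p : ι × ι => c p.1 p.2 * (z ^ e p.2 * (z ^ (e p.1 + 1))⁻¹)) (F z)) :
    HasSum (fun i => c i i) ((2 * π * I)⁻¹ * ∮ z in C(0, R), F z) := by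
  have hsum := hasSum_circleIntegral_of_norm_le hR.le
    (fun p z hz => ContinuousAt.continuousWithinAt <| by
      have hz0 : z ≠ 0 := ne_of_mem_sphere hz hR.ne'
      fun_prop (disch := simp [hz0]))
    hc (fun p z hz => by simp [mem_sphere_zero_iff_norm.1 hz]) hF
  simp only [circleIntegral.integral_const_mul, circleIntegral_pow_mul_inv_pow_succ _ _ hR] at hsum
  have diag_injective : Function.Injective fun i : ι => (i, i) := fun i j h => congrArg Prod.fst h
  rw [← diag_injective.hasSum_iff fun p hp => by
    rw [if_neg fun h => hp ⟨p.1, Prod.ext rfl (he h)⟩, mul_zero]] at hsum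
  simpa only [Function.comp_apply, if_true, mul_comm (c _ _),
    inv_mul_cancel_left₀ Complex.two_pi_I_ne_zero] using hsum.mul_left (2 * π * I)⁻¹

lemma one_sub_mul_ne_zero {𝕜 : Type*} [NormedDivisionRing 𝕜] {a z : 𝕜} (ha : ‖a‖ < 1)
    (hz : ‖z‖ ≤ 1) : 1 - a * z ≠ 0 := by
  have hnorm : ‖a * z‖ < 1 := by
    rw [norm_mul]
    exact (mul_le_of_le_one_right (norm_nonneg a) hz).trans_lt ha
  exact sub_ne_zero.2 fun h => hnorm.ne (by rw [← h, norm_one])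

-- Partial fractions: `ψ` fixes `a` with multiplier `A`, and its other fixed point `a⁻¹` lies
-- outside the unit disc, so `a` contributes the only residue.
lemma circleIntegral_inv_sub_of_moebius {ψ : ℂ → ℂ} {a A : ℂ} (ha : ‖a‖ < 1) (hA : A ≠ 1)
    (hψ : ∀ z ∈ sphere (0 : ℂ) 1, (a - ψ z) * (1 - a * z) = A * ((a - z) * (1 - a * ψ z))) :
    ∮ z in C(0, 1), (z - ψ z)⁻¹ = 2 * π * I * (1 - A)⁻¹ := by
  have hregular : DifferentiableOn ℂ (fun z => a * A * (1 - a * z)⁻¹) (closedBall 0 1) :=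
    fun z hz => DifferentiableAt.differentiableWithinAt <| by
      have := one_sub_mul_ne_zero ha (mem_closedBall_zero_iff.1 hz)
      fun_prop (disch := assumption)
  have ha_ball : a ∈ ball (0 : ℂ) 1 := by simpa using ha
  have hsub {z : ℂ} (hz : z ∈ sphere (0 : ℂ) 1) : z - a ≠ 0 := fun h => by
    rw [sub_eq_zero.1 h, mem_sphere_zero_iff_norm] at hz
    exact ha.ne hz
  have partial_fractions : Set.EqOn (fun z => (z - ψ z)⁻¹)
      (fun z => (1 - A)⁻¹ * ((z - a)⁻¹ + a * A * (1 - a * z)⁻¹)) (sphere 0 1) := fun z hz => by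
    have hz1 := one_sub_mul_ne_zero ha (mem_sphere_zero_iff_norm.1 hz).le
    have hza := hsub hz
    have hA' : 1 - A ≠ 0 := sub_ne_zero.2 hA.symm
    have key : (z - ψ z) * ((1 - a * z) + a * A * (z - a)) = (1 - A) * (z - a) * (1 - a * z) := by
      linear_combination hψ z hz
    have hψz : z - ψ z ≠ 0 := fun h => by
      rw [h, zero_mul] at key
      exact mul_ne_zero (mul_ne_zero hA' hza) hz1 key.symm
    beta_reduce
    generalize 1 - a * z = v at hz1 key ⊢
    field_simp
    linear_combination -key
  have hholomorphic : ∮ z in C(0, 1), a * A * (1 - a * z)⁻¹ = 0 :=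
    DiffContOnCl.circleIntegral_eq_zero zero_le_one <|
      (hregular.mono closure_ball_subset_closedBall).diffContOnCl
  rw [circleIntegral.integral_congr zero_le_one partial_fractions,
    circleIntegral.integral_const_mul, circleIntegral.integral_add,
    circleIntegral.integral_sub_inv_of_mem_ball ha_ball, hholomorphic, add_zero, mul_comm]
  · exact ContinuousOn.circleIntegrable zero_le_one fun z hz =>
      ContinuousAt.continuousWithinAt (by have := hsub hz; fun_prop (disch := assumption))
  · exact (hregular.continuousOn.mono sphere_subset_closedBall).circleIntegrable zero_le_one

end CircleIntegral

section CompositionKernel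

open Metric Real
open Complex (I)

lemma hasSum_prod_of_fiberwise {β γ E : Type*} [AddCommGroup E] [TopologicalSpace E]
    [IsTopologicalAddGroup E] [T3Space E] {f : β × γ → E} {g : β → E} {a : E} (hf : Summable f)
    (hrow : ∀ b, HasSum (fun c => f (b, c)) (g b)) (hg : HasSum g a) : HasSum f a :=
  (hf.hasSum.prod_fiberwise hrow).unique hg ▸ hf.hasSum

lemma summable_toReal_mul_of_norm_le_one {ι : Type*} {f : ι → ℝ≥0∞} (hf : ∑' i, f i ≠ ∞) {g : ι → ℂ}
    (hg : ∀ i, ‖g i‖ ≤ 1) : Summable fun i => ((f i).toReal : ℂ) * g i := by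
  refine (ENNReal.summable_toReal hf).of_norm_bounded fun i => ?_
  rw [norm_mul, Complex.norm_real, Real.norm_of_nonneg ENNReal.toReal_nonneg]
  exact mul_le_of_le_one_right ENNReal.toReal_nonneg (hg i)

lemma hasSum_pow_mul_inv_pow_succ {𝕜 : Type*} [NormedField 𝕜] {x z : 𝕜} (hxz : ‖x‖ < ‖z‖) :
    HasSum (fun n : ℕ+ => x ^ (n : ℕ) * (z ^ ((n : ℕ) + 1))⁻¹) ((z - x)⁻¹ - z⁻¹) := by
  have hz : z ≠ 0 := norm_pos_iff.1 ((norm_nonneg x).trans_lt hxz)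
  have hratio : ‖x / z‖ < 1 := by rwa [norm_div, div_lt_one (norm_pos_iff.2 hz)]
  have hgeom := (hasSum_geometric_of_norm_lt_one hratio).mul_right z⁻¹
  rw [← mul_inv, one_sub_mul, div_mul_cancel₀ x hz] at hgeom
  rw [hasSum_pnat_iff (f := fun n => x ^ n * (z ^ (n + 1))⁻¹)]
  simpa [div_eq_mul_inv, mul_pow, pow_succ', mul_assoc, mul_left_comm, mul_comm] using hgeom

/-- A nonnegative kernel `w` on the positive integers is the composition kernel of `φ` when it is
the matrix of `f ↦ f ∘ φ`, in the basis of monomials, on power series modulo constants: row `n`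
holds the Taylor coefficients of `φ ^ n` other than the constant one. The generating functions are
required to converge on the closed unit disc, so that row sums are finite. -/
structure IsCompositionKernel (w : ℕ+ → ℕ+ → ℝ≥0∞) (φ : ℂ → ℂ) : Prop where
  ne_top : ∀ n m, w n m ≠ ∞
  hasSum : ∀ (n : ℕ+) (y : ℂ), ‖y‖ ≤ 1 →
    HasSum (fun m : ℕ+ => ((w n m).toReal : ℂ) * y ^ (m : ℕ)) (φ y ^ (n : ℕ) - φ 0 ^ (n : ℕ))

namespace IsCompositionKernel

variable {v w : ℕ+ → ℕ+ → ℝ≥0∞} {φ ψ : ℂ → ℂ}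

lemma tsum_row_eq (hw : IsCompositionKernel w φ) (n : ℕ+) :
    ∑' m, w n m = ENNReal.ofReal ‖φ 1 ^ (n : ℕ) - φ 0 ^ (n : ℕ)‖ := by
  have hsum := hw.hasSum n 1 norm_one.le
  simp only [one_pow, mul_one] at hsum
  have hreal : Summable fun m => (w n m).toReal := Complex.summable_ofReal.1 hsum.summable
  rw [← hsum.tsum_eq, ← Complex.ofReal_tsum, Complex.norm_real,
    Real.norm_of_nonneg (tsum_nonneg fun _ => ENNReal.toReal_nonneg),
    ENNReal.ofReal_tsum_of_nonneg (fun _ => ENNReal.toReal_nonneg) hreal]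
  exact tsum_congr fun m => (ENNReal.ofReal_toReal (hw.ne_top n m)).symm

lemma tsum_row_le (hw : IsCompositionKernel w φ) {r : ℝ}
    (hφ : Set.MapsTo φ (closedBall 0 1) (closedBall 0 r)) (n : ℕ+) :
    ∑' m, w n m ≤ ENNReal.ofReal (2 * r ^ (n : ℕ)) := by
  have hpow {y : ℂ} (hy : y ∈ closedBall (0 : ℂ) 1) : ‖φ y ^ (n : ℕ)‖ ≤ r ^ (n : ℕ) := by
    rw [norm_pow]
    exact pow_le_pow_left₀ (norm_nonneg _) (mem_closedBall_zero_iff.1 (hφ hy)) _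
  rw [hw.tsum_row_eq]
  refine ENNReal.ofReal_le_ofReal ((norm_sub_le _ _).trans ?_)
  rw [two_mul]
  exact add_le_add (hpow (by simp)) (hpow (by simp))

protected lemma continuousOn (hw : IsCompositionKernel w φ) : ContinuousOn φ (closedBall 0 1) := by
  have hrow : ∑' m, w 1 m ≠ ∞ := hw.tsum_row_eq 1 ▸ ENNReal.ofReal_ne_top
  have hseries : ContinuousOn (fun y => ∑' m : ℕ+, ((w 1 m).toReal : ℂ) * y ^ (m : ℕ))
      (closedBall 0 1) := by
    refine continuousOn_tsum (fun m => by fun_prop) (ENNReal.summable_toReal hrow) fun m y hy => ?_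
    rw [norm_mul, Complex.norm_real, Real.norm_of_nonneg ENNReal.toReal_nonneg, norm_pow]
    exact mul_le_of_le_one_right ENNReal.toReal_nonneg
      (pow_le_one₀ (norm_nonneg _) (mem_closedBall_zero_iff.1 hy))
  refine (hseries.add continuousOn_const).congr (f := fun y => _ + φ 0) fun y hy => ?_
  simp [(hw.hasSum 1 y (mem_closedBall_zero_iff.1 hy)).tsum_eq]

lemma delta : IsCompositionKernel (fun n m => if n = m then 1 else 0) id where
  ne_top n m := by split_ifs <;> simp
  hasSum n y _ := by
    convert hasSum_single n fun m hm => ?_ using 1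
    · simp
    · simp [hm.symm]

lemma tsum_comp_ne_top (hv : IsCompositionKernel v φ) (hw : IsCompositionKernel w ψ)
    (hψ : Set.MapsTo ψ (closedBall 0 1) (closedBall 0 1)) (n : ℕ+) :
    ∑' p : ℕ+ × ℕ+, v n p.1 * w p.1 p.2 ≠ ∞ := by
  have row_le (l : ℕ+) : ∑' m, w l m ≤ 2 := by simpa using hw.tsum_row_le hψ l
  refine ne_top_of_le_ne_top ?_ (calc
    ∑' p : ℕ+ × ℕ+, v n p.1 * w p.1 p.2 = ∑' l, v n l * ∑' m, w l m := by
      simp only [ENNReal.tsum_prod', ENNReal.tsum_mul_left]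
    _ ≤ ∑' l, v n l * 2 := ENNReal.tsum_le_tsum fun l => mul_le_mul_right (row_le l) _
    _ = (∑' l, v n l) * 2 := ENNReal.tsum_mul_right)
  rw [hv.tsum_row_eq]
  exact ENNReal.mul_ne_top ENNReal.ofReal_ne_top ENNReal.ofNat_ne_top

protected lemma comp (hv : IsCompositionKernel v φ) (hw : IsCompositionKernel w ψ)
    (hψ : Set.MapsTo ψ (closedBall 0 1) (closedBall 0 1)) :
    IsCompositionKernel (fun n m => ∑' l, v n l * w l m) (φ ∘ ψ) := by
  have total_ne_top := hv.tsum_comp_ne_top hw hψ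
  have column_ne_top (n m : ℕ+) : ∑' l, v n l * w l m ≠ ∞ :=
    ne_top_of_le_ne_top (total_ne_top n) <|
      ENNReal.tsum_comp_le_tsum_of_injective (Prod.mk_left_injective m)
        fun p : ℕ+ × ℕ+ => v n p.1 * w p.1 p.2
  refine ⟨column_ne_top, fun n y hy => ?_⟩
  have hψ_norm {x : ℂ} (hx : ‖x‖ ≤ 1) : ‖ψ x‖ ≤ 1 := by
    simpa using hψ (mem_closedBall_zero_iff.2 hx)
  have by_rows : HasSum
      (fun p : ℕ+ × ℕ+ => ((v n p.1 * w p.1 p.2).toReal : ℂ) * y ^ (p.2 : ℕ))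
      (φ (ψ y) ^ (n : ℕ) - φ (ψ 0) ^ (n : ℕ)) := by
    refine hasSum_prod_of_fiberwise
      (g := fun l => ((v n l).toReal : ℂ) * (ψ y ^ (l : ℕ) - ψ 0 ^ (l : ℕ)))
      (summable_toReal_mul_of_norm_le_one (total_ne_top n) fun p => ?_) (fun l => ?_) ?_
    · simpa only [norm_pow] using pow_le_one₀ (norm_nonneg y) hy
    · simpa only [ENNReal.toReal_mul, Complex.ofReal_mul, mul_assoc] using
        (hw.hasSum l y hy).mul_left ((v n l).toReal : ℂ)
    · simpa only [mul_sub, sub_sub_sub_cancel_right] using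
        (hv.hasSum n _ (hψ_norm hy)).sub (hv.hasSum n _ (hψ_norm (by simp)))
  have column_sum (m : ℕ+) : HasSum (fun l => ((v n l * w l m).toReal : ℂ))
      ((∑' l, v n l * w l m).toReal : ℂ) := by
    rw [ENNReal.tsum_toReal_eq (ENNReal.ne_top_of_tsum_ne_top (column_ne_top n m))]
    exact Complex.hasSum_ofReal.2 (ENNReal.hasSum_toReal (column_ne_top n m))
  have by_columns : HasSum
      (fun p : ℕ+ × ℕ+ => ((v n p.2 * w p.2 p.1).toReal : ℂ) * y ^ (p.1 : ℕ))
      (φ (ψ y) ^ (n : ℕ) - φ (ψ 0) ^ (n : ℕ)) :=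
    (Equiv.prodComm ℕ+ ℕ+).hasSum_iff.2 by_rows
  exact by_columns.prod_fiberwise fun m => (column_sum m).mul_right (y ^ (m : ℕ))

protected lemma kernelPow (hw : IsCompositionKernel w φ)
    (hφ : Set.MapsTo φ (closedBall 0 1) (closedBall 0 1)) (k : ℕ) :
    IsCompositionKernel (kernelPow w k) φ^[k] := by
  induction k with
  | zero => exact delta
  | succ k ih =>
    rw [Function.iterate_succ']
    exact hw.comp ih (hφ.iterate k)

lemma tsum_ne_top (hw : IsCompositionKernel w ψ) {ρ : ℝ} (hρ : ρ < 1)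
    (hψ : Set.MapsTo ψ (closedBall 0 1) (closedBall 0 ρ)) :
    ∑' p : ℕ+ × ℕ+, w p.1 p.2 ≠ ∞ := by
  have hρ0 : 0 ≤ ρ := nonempty_closedBall.1 ⟨ψ 0, hψ (by simp)⟩
  have hgeom : Summable fun n : ℕ+ => 2 * ρ ^ (n : ℕ) :=
    ((summable_geometric_of_lt_one hρ0 hρ).mul_left 2).comp_injective PNat.coe_injective
  rw [ENNReal.tsum_prod']
  exact ne_top_of_le_ne_top hgeom.tsum_ofReal_ne_top (ENNReal.tsum_le_tsum (hw.tsum_row_le hψ))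

lemma hasSum_inv_sub (hw : IsCompositionKernel w ψ) {ρ : ℝ} (hρ : ρ < 1)
    (hψ : Set.MapsTo ψ (closedBall 0 1) (closedBall 0 ρ)) {z : ℂ} (hz : ‖z‖ = 1) :
    HasSum (fun p : ℕ+ × ℕ+ =>
        ((w p.1 p.2).toReal : ℂ) * (z ^ (p.2 : ℕ) * (z ^ ((p.1 : ℕ) + 1))⁻¹))
      ((z - ψ z)⁻¹ - (z - ψ 0)⁻¹) := by
  have hψ_lt {y : ℂ} (hy : ‖y‖ ≤ 1) : ‖ψ y‖ < ‖z‖ :=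
    hz ▸ (mem_closedBall_zero_iff.1 (hψ (mem_closedBall_zero_iff.2 hy))).trans_lt hρ
  refine hasSum_prod_of_fiberwise
    (summable_toReal_mul_of_norm_le_one (hw.tsum_ne_top hρ hψ) fun p => by simp [hz])
    (fun n => by simpa only [mul_assoc] using (hw.hasSum n z hz.le).mul_right _) ?_
  simpa only [sub_mul, sub_sub_sub_cancel_right] using
    (hasSum_pow_mul_inv_pow_succ (hψ_lt hz.le)).sub
      (hasSum_pow_mul_inv_pow_succ (hψ_lt (by simp)))

lemma hasSum_trace (hw : IsCompositionKernel w ψ) {ρ : ℝ} (hρ : ρ < 1)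
    (hψ : Set.MapsTo ψ (closedBall 0 1) (closedBall 0 ρ)) :
    HasSum (fun n => ((w n n).toReal : ℂ))
      ((2 * π * I)⁻¹ * (∮ z in C(0, 1), (z - ψ z)⁻¹) - 1) := by
  have hψ_lt {y : ℂ} (hy : ‖y‖ ≤ 1) : ‖ψ y‖ < 1 :=
    (mem_closedBall_zero_iff.1 (hψ (mem_closedBall_zero_iff.2 hy))).trans_lt hρ
  have hdiag := hasSum_coeff_diag PNat.coe_injective one_pos
    (c := fun n m => ((w n m).toReal : ℂ))
    (by simpa using ENNReal.summable_toReal (hw.tsum_ne_top hρ hψ))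
    fun z hz => hw.hasSum_inv_sub hρ hψ (mem_sphere_zero_iff_norm.1 hz)
  have h0 : ‖ψ 0‖ < 1 := hψ_lt (by simp)
  have hint : CircleIntegrable (fun z => (z - ψ z)⁻¹) 0 1 := by
    refine ContinuousOn.circleIntegrable zero_le_one (ContinuousOn.inv₀
      (continuousOn_id.sub (hw.continuousOn.mono sphere_subset_closedBall)) fun z hz h => ?_)
    have hz1 : ‖z‖ = 1 := mem_sphere_zero_iff_norm.1 hz
    exact (hψ_lt hz1.le).ne (by rwa [← sub_eq_zero.1 h])
  have hint₀ : CircleIntegrable (fun z => (z - ψ 0)⁻¹) 0 1 :=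
    circleIntegrable_sub_inv_iff.2 (.inr (by simpa using h0.ne))
  rwa [circleIntegral.integral_sub hint hint₀,
    circleIntegral.integral_sub_inv_of_mem_ball (mem_ball_zero_iff.2 h0),
    mul_sub, inv_mul_cancel₀ Complex.two_pi_I_ne_zero] at hdiag

end IsCompositionKernel

end CompositionKernel

section Moebius

open Metric

/-- The Möbius map `y ↦ g / (1 - g y)`: its `n`-th powers, for `g = e^{-μ}`, generate the rows of
the transfer matrix of pure CDT. -/
noncomputable def geomMap (g : ℝ) (y : ℂ) : ℂ := g / (1 - g * y)

/-- The fixed point of `geomMap g` in the unit disc, that is, the smaller root of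
`g (1 + a²) = a`; its square is the multiplier there. -/
noncomputable def geomFixedPoint (g : ℝ) : ℝ := (1 - √(1 - 4 * g ^ 2)) / (2 * g)

variable {g a : ℝ}

lemma mapsTo_geomMap (hg0 : 0 ≤ g) (hg1 : g < 1) :
    Set.MapsTo (geomMap g) (closedBall 0 1) (closedBall 0 (g / (1 - g))) := by
  intro y hy
  rw [mem_closedBall_zero_iff] at hy ⊢
  have denominator_bound : 1 - g ≤ ‖1 - g * y‖ := calc
    1 - g ≤ ‖(1 : ℂ)‖ - ‖(g : ℂ) * y‖ := by
      rw [norm_one, norm_mul, Complex.norm_of_nonneg hg0]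
      gcongr
      exact mul_le_of_le_one_right hg0 hy
    _ ≤ ‖1 - g * y‖ := norm_sub_norm_le _ _
  rw [geomMap, norm_div, Complex.norm_of_nonneg hg0]
  exact div_le_div_of_nonneg_left hg0 (sub_pos.2 hg1) denominator_bound

lemma mapsTo_geomMap_closedBall_one (hg0 : 0 ≤ g) (hg : g ≤ 1 / 2) :
    Set.MapsTo (geomMap g) (closedBall 0 1) (closedBall 0 1) :=
  (mapsTo_geomMap hg0 (by linarith)).mono_right <| closedBall_subset_closedBall <|
    (div_le_one (by linarith)).2 (by linarith)

lemma mapsTo_geomMap_iterate (hg0 : 0 ≤ g) (hg : g ≤ 1 / 2) {k : ℕ} (hk : k ≠ 0) :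
    Set.MapsTo (geomMap g)^[k] (closedBall 0 1) (closedBall 0 (g / (1 - g))) := by
  obtain ⟨k, rfl⟩ := Nat.exists_eq_succ_of_ne_zero hk
  rw [Function.iterate_succ']
  exact (mapsTo_geomMap hg0 (by linarith)).comp ((mapsTo_geomMap_closedBall_one hg0 hg).iterate k)

lemma geomFixedPoint_equation (hg0 : 0 < g) (hg : g ≤ 1 / 2) :
    g * (1 + geomFixedPoint g ^ 2) = geomFixedPoint g := by
  have hsqrt : √(1 - 4 * g ^ 2) ^ 2 = 1 - 4 * g ^ 2 := Real.sq_sqrt (by nlinarith)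
  rw [geomFixedPoint]
  generalize √(1 - 4 * g ^ 2) = s at hsqrt ⊢
  field_simp
  linear_combination hsqrt

lemma geomFixedPoint_pos (hg0 : 0 < g) : 0 < geomFixedPoint g :=
  div_pos (sub_pos.2 ((Real.sqrt_lt' one_pos).2 (by nlinarith))) (by positivity)

lemma geomFixedPoint_lt_one (hg0 : 0 < g) (hg : g < 1 / 2) : geomFixedPoint g < 1 := by
  rw [geomFixedPoint, div_lt_one (by positivity), sub_lt_comm]
  exact Real.lt_sqrt_of_sq_lt (by nlinarith)

-- In the coordinate `y ↦ (a - y) / (1 - a y)` the map is multiplication by `a²`; denominators are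
-- cleared.
lemma geomMap_moebius (hga : g * (1 + a ^ 2) = a) {y : ℂ} (hy : 1 - g * y ≠ 0) :
    (a - geomMap g y) * (1 - a * y) = a ^ 2 * ((a - y) * (1 - a * geomMap g y)) := by
  have hga' : (g : ℂ) * (1 + a ^ 2) = a := by exact_mod_cast hga
  have hmap : geomMap g y * (1 - g * y) = g := div_mul_cancel₀ _ hy
  have zero_image : (a - geomMap g y) * (1 - g * y) = a * g * (a - y) := by
    linear_combination -hmap - hga'
  have pole_image : a * ((1 - a * geomMap g y) * (1 - g * y)) = g * (1 - a * y) := by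
    linear_combination -(a ^ 2 : ℂ) * hmap - hga'
  refine mul_right_cancel₀ hy ?_
  linear_combination (1 - a * y) * zero_image - a * (a - y) * pole_image

lemma geomMap_iterate_moebius (ha : |a| < 1) (hg0 : 0 ≤ g) (hga : g * (1 + a ^ 2) = a)
    (k : ℕ) {y : ℂ} (hy : ‖y‖ ≤ 1) :
    (a - (geomMap g)^[k] y) * (1 - a * y) =
      (a ^ 2) ^ k * ((a - y) * (1 - a * (geomMap g)^[k] y)) := by
  have hg : g ≤ 1 / 2 := by nlinarith [sq_nonneg (1 - a)]
  induction k with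
  | zero => simp
  | succ k ih =>
    have hnorm : ‖(geomMap g)^[k] y‖ ≤ 1 := mem_closedBall_zero_iff.1 <|
      (mapsTo_geomMap_closedBall_one hg0 hg).iterate k (mem_closedBall_zero_iff.2 hy)
    rw [Function.iterate_succ_apply']
    generalize (geomMap g)^[k] y = x at ih hnorm ⊢
    have step := geomMap_moebius hga <| one_sub_mul_ne_zero
      (by rw [Complex.norm_of_nonneg hg0]; linarith) hnorm
    have hax : 1 - a * x ≠ 0 := one_sub_mul_ne_zero (by simpa using ha) hnorm
    refine mul_right_cancel₀ hax ?_
    linear_combination (1 - a * y) * step + a ^ 2 * (1 - a * geomMap g x) * ih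

end Moebius

section PartitionFunction

open Real
open Metric
open Complex (I)

lemma toReal_cdtWeight (μ : ℝ) (n l : ℕ+) :
    (cdtWeight μ n l).toReal =
      ((n + l - 1 : ℕ).choose (n - 1) : ℝ) * exp (-μ) ^ (n + l : ℕ) := by
  rw [cdtWeight, ENNReal.toReal_ofReal (by positivity), ← exp_nat_mul]
  congr 2
  push_cast
  ring

lemma isCompositionKernel_cdtWeight {μ : ℝ} (hμ : 0 < μ) :
    IsCompositionKernel (cdtWeight μ) (geomMap (exp (-μ))) where
  ne_top _ _ := ENNReal.ofReal_ne_top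
  hasSum n y hy := by
    have hgy : ‖(exp (-μ) : ℂ) * y‖ < 1 := by
      rw [norm_mul, Complex.norm_of_nonneg (exp_pos _).le]
      exact (mul_le_of_le_one_right (exp_pos _).le hy).trans_lt (by simpa using hμ)
    have hseries := (hasSum_choose_mul_geometric_of_norm_lt_one (n - 1 : ℕ) hgy).mul_left
      ((exp (-μ) : ℂ) ^ (n : ℕ))
    have hpow (z : ℂ) : geomMap (exp (-μ)) z ^ (n : ℕ) =
        (exp (-μ) : ℂ) ^ (n : ℕ) * (1 / (1 - exp (-μ) * z) ^ ((n : ℕ) - 1 + 1)) := by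
      rw [Nat.sub_add_cancel n.pos, geomMap, div_pow, mul_one_div]
    have hterm (m : ℕ+) : ((cdtWeight μ n m).toReal : ℂ) * y ^ (m : ℕ) =
        (exp (-μ) : ℂ) ^ (n : ℕ) *
          (((m + (n - 1) : ℕ).choose (n - 1) : ℂ) * (exp (-μ) * y) ^ (m : ℕ)) := by
      rw [toReal_cdtWeight, add_comm (n : ℕ), Nat.add_sub_assoc (Nat.succ_le_of_lt n.pos)]
      push_cast
      ring
    simp only [hterm]
    rw [hasSum_pnat_iff (f := fun m => (exp (-μ) : ℂ) ^ (n : ℕ) *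
      (((m + (n - 1) : ℕ).choose (n - 1) : ℂ) * (exp (-μ) * y) ^ m))]
    simpa [hpow] using hseries

lemma cdtLambda_eq_geomFixedPoint_sq (μ : ℝ) :
    cdtLambda μ = geomFixedPoint (exp (-μ)) ^ 2 := by
  rw [cdtLambda, geomFixedPoint, ← exp_nat_mul]
  ring_nf

lemma exp_neg_lt_half {μ : ℝ} (hμ : log 2 < μ) : exp (-μ) < 1 / 2 := by
  rw [← lt_log_iff_exp_lt (by norm_num), one_div, log_inv]
  exact neg_lt_neg hμ

lemma cdtLambda_pos (μ : ℝ) : 0 < cdtLambda μ := by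
  rw [cdtLambda_eq_geomFixedPoint_sq]
  exact pow_pos (geomFixedPoint_pos (exp_pos _)) 2

lemma cdtLambda_lt_one {μ : ℝ} (hμ : log 2 < μ) : cdtLambda μ < 1 := by
  rw [cdtLambda_eq_geomFixedPoint_sq]
  exact pow_lt_one₀ (geomFixedPoint_pos (exp_pos _)).le
    (geomFixedPoint_lt_one (exp_pos _) (exp_neg_lt_half hμ)) two_ne_zero

theorem toReal_cdtZ {N : ℕ} (hN : N ≠ 0) {μ : ℝ} (hμ : log 2 < μ) :
    (cdtZ N μ).toReal = cdtLambda μ ^ N / (1 - cdtLambda μ ^ N) := by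
  have hg := exp_neg_lt_half hμ
  have hg0 : 0 ≤ exp (-μ) := (exp_pos _).le
  have hkernel := (isCompositionKernel_cdtWeight ((log_pos one_lt_two).trans hμ)).kernelPow
    (mapsTo_geomMap_closedBall_one hg0 hg.le) N
  have htrace := hkernel.hasSum_trace ((div_lt_one (by linarith)).2 (by linarith))
    (mapsTo_geomMap_iterate hg0 hg.le hN)
  have hpow_lt : cdtLambda μ ^ N < 1 := pow_lt_one₀ (cdtLambda_pos μ).le (cdtLambda_lt_one hμ) hN
  have hfixed_norm : |geomFixedPoint (exp (-μ))| < 1 := by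
    rw [abs_of_pos (geomFixedPoint_pos (exp_pos _))]
    exact geomFixedPoint_lt_one (exp_pos _) hg
  have hintegral : ∮ z in C(0, 1), (z - (geomMap (exp (-μ)))^[N] z)⁻¹ =
      2 * π * I * (1 - ((cdtLambda μ ^ N : ℝ) : ℂ))⁻¹ := by
    refine circleIntegral_inv_sub_of_moebius (a := geomFixedPoint (exp (-μ)))
      (A := (cdtLambda μ ^ N : ℝ))
      (by simpa using hfixed_norm) (by exact_mod_cast hpow_lt.ne) fun z hz => ?_
    rw [cdtLambda_eq_geomFixedPoint_sq]
    push_cast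
    exact geomMap_iterate_moebius hfixed_norm hg0
      (geomFixedPoint_equation (exp_pos _) hg.le) N (mem_sphere_zero_iff_norm.1 hz).le
  rw [hintegral, inv_mul_cancel_left₀ Complex.two_pi_I_ne_zero] at htrace
  rw [cdtZ, tsum_closed_path_weight_eq_trace_kernelPow _ hN,
    ENNReal.tsum_toReal_eq fun n => hkernel.ne_top n n]
  refine HasSum.tsum_eq (Complex.hasSum_ofReal.1 ?_)
  convert htrace using 1
  have hne : 1 - cdtLambda μ ^ N ≠ 0 := (sub_pos.2 hpow_lt).ne'
  norm_cast
  field_simp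
  ring

lemma tendsto_log_pow_div_one_sub_pow_div {L : ℝ} (hL0 : 0 < L) (hL1 : L < 1) :
    Filter.Tendsto (fun N : ℕ => log (L ^ N / (1 - L ^ N)) / N) Filter.atTop (nhds (log L)) := by
  have hpow : Filter.Tendsto (fun N : ℕ => 1 - L ^ N) Filter.atTop (nhds 1) := by
    simpa using (tendsto_pow_atTop_nhds_zero_of_lt_one hL0.le hL1).const_sub 1
  have hcorrection := (hpow.log one_ne_zero).div_atTop tendsto_natCast_atTop_atTop
  have hlimit := hcorrection.const_sub (log L)
  rw [sub_zero] at hlimit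
  refine hlimit.congr' ?_
  filter_upwards [Filter.eventually_ne_atTop 0] with N hN
  have hlt : L ^ N < 1 := pow_lt_one₀ hL0.le hL1 hN
  rw [log_div (pow_pos hL0 N).ne' (sub_pos.2 hlt).ne', log_pow]
  field_simp

end PartitionFunction

/-- For `μ > ln 2`, `(1/N) ln Z_N(μ)` converges to `ln Λ(μ)` as `N → ∞`. -/
theorem cdtZ_free_energy (μ : ℝ) (hμ : Real.log 2 < μ) :
    Filter.Tendsto (fun N : ℕ => Real.log ((cdtZ N μ).toReal) / N)
      Filter.atTop (nhds (Real.log (cdtLambda μ))) := by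
  refine (tendsto_log_pow_div_one_sub_pow_div (cdtLambda_pos μ) (cdtLambda_lt_one hμ)).congr' ?_
  filter_upwards [Filter.eventually_ne_atTop 0] with N hN
  rw [toReal_cdtZ hN hμ]
end
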